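/- arXiv:1909.01906 — 2 statements merged into one kernel-verified Lean document; each statement's English description precedes it below -/
import Mathlib

section
/- Let G be a finite group and H ≤ G a subgroup. Let λ : G → U(ℓ²(G)) be the left regular representation (λ(g)δ_h = δ_{gh}), let L(G) = span{λ(g) : g ∈ G} and L(H) = span{λ(h) : h ∈ H}, viewed as unital *-subalgebras of B(ℓ²(G)) ≅ M_{|G|}. Then D(L(G)‖L(H)) = log [G : H]. -/
open scoped ENNReal Classical ComplexOrder
open Matrix

noncomputable section

namespace GJL

variable {n : Type*} [Fintype n] [DecidableEq n]

/-- `Mat n` is the matrix *-algebra with rows and columns indexed by `n`. -/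
abbrev Mat (n : Type*) [Fintype n] [DecidableEq n] := Matrix n n ℂ

/-- A density matrix: positive semidefinite with trace one. -/
def IsDensity (ρ : Mat n) : Prop := ρ.PosSemidef ∧ ρ.trace = 1

/-- The real part of the (matrix) trace. -/
def traceR (A : Mat n) : ℝ := (A.trace).re

/-- Real matrix powers via the continuous functional calculus.  For positive
semidefinite matrices and negative exponents this is the generalized inverse
power on the support, since `(0 : ℝ) ^ r = 0` for `r ≠ 0`. -/
def mpow (A : Mat n) (r : ℝ) : Mat n := cfc (fun x : ℝ => x ^ r) A

/-- Matrix logarithm on the support (`Real.log 0 = 0`). -/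
def mlog (A : Mat n) : Mat n := cfc Real.log A

/-- Schatten `p`-norm `(Tr ((x* x)^(p/2)))^(1/p)`. -/
def snorm (p : ℝ) (x : Mat n) : ℝ := (traceR (mpow (xᴴ * x) (p/2))) ^ (1/p)

/-- Operator norm `‖x‖_∞`. -/
def opNorm (x : Mat n) : ℝ := ‖(Matrix.toEuclideanCLM (𝕜 := ℂ) x : EuclideanSpace ℂ n →L[ℂ] EuclideanSpace ℂ n)‖

/-- The support projection of `ρ` is dominated by that of `σ` (for positive
semidefinite matrices: `ker σ ⊆ ker ρ`). -/
def suppLe (ρ σ : Mat n) : Prop := ∀ v, σ.mulVec v = 0 → ρ.mulVec v = 0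

/-- `e` is the support projection of `ρ`. -/
def IsSupportProj (ρ e : Mat n) : Prop :=
  e.IsHermitian ∧ e * e = e ∧ ∀ v, e.mulVec v = 0 ↔ ρ.mulVec v = 0

/-- `D_∞(ρ‖σ) = log min {λ ≥ 0 | ρ ≤ λ σ}`, `⊤` if no such `λ` exists. -/
def Dinf (ρ σ : Mat n) : EReal :=
  if ∃ c : ℝ, 0 ≤ c ∧ (c • σ - ρ).PosSemidef then
    ((Real.log (sInf {c : ℝ | 0 ≤ c ∧ (c • σ - ρ).PosSemidef}) : ℝ) : EReal)
  else ⊤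

/-- Umegaki relative entropy `D(ρ‖σ) = Tr(ρ log ρ - ρ log σ)`, `⊤` if the
support condition fails. -/
def DU (ρ σ : Mat n) : EReal :=
  if suppLe ρ σ then ((traceR (ρ * mlog ρ - ρ * mlog σ) : ℝ) : EReal) else ⊤

/-- The sandwiched matrix `σ^{(1-p)/(2p)} ρ σ^{(1-p)/(2p)}`; note that for
`p > 1` the exponent `(1-p)/(2p)` equals `-1/(2p')` with `1/p + 1/p' = 1`. -/
def sandwich (p : ℝ) (ρ σ : Mat n) : Mat n :=
  mpow σ ((1 - p)/(2*p)) * ρ * mpow σ ((1 - p)/(2*p))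

/-- The sandwiched Rényi relative entropy `D_p(ρ‖σ)` for `p ∈ [1/2, ∞]`:
for `p ∈ (1,∞)` it is `p' log ‖σ^{-1/(2p')} ρ σ^{-1/(2p')}‖_p
= (p-1)⁻¹ log Tr ((σ^{-1/(2p')} ρ σ^{-1/(2p')})^p)` when the support of `ρ` is
dominated by that of `σ` and `⊤` otherwise; for `p ∈ [1/2, 1)` it is
`(p-1)⁻¹ log Tr ((σ^{(1-p)/(2p)} ρ σ^{(1-p)/(2p)})^p)` (`⊤` when the trace
vanishes, i.e. when the honest value is `+∞`); `D_1` is the Umegaki relative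
entropy and `D_∞` the max-relative entropy. -/
def Dp (p : ℝ≥0∞) (ρ σ : Mat n) : EReal :=
  if p = ⊤ then Dinf ρ σ
  else if p = 1 then DU ρ σ
  else if 1 < p.toReal ∧ ¬ suppLe ρ σ then ⊤
  else if traceR (mpow (sandwich p.toReal ρ σ) p.toReal) = 0 then ⊤
  else (((p.toReal - 1)⁻¹ * Real.log (traceR (mpow (sandwich p.toReal ρ σ) p.toReal)) : ℝ) : EReal)

/-- `D_p(ρ‖S) = inf { D_p(ρ‖σ) | σ a density in S }`. -/
def DpSet (p : ℝ≥0∞) (ρ : Mat n) (S : Set (Mat n)) : EReal :=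
  ⨅ σ ∈ {σ ∈ S | IsDensity σ}, Dp p ρ σ

/-- `D_p(A‖S) = sup { D_p(ρ‖S) | ρ a density in A }`. -/
def DpRel (p : ℝ≥0∞) (A S : Set (Mat n)) : EReal :=
  ⨆ ρ ∈ {ρ ∈ A | IsDensity ρ}, DpSet p ρ S

open scoped Kronecker in
/-- The algebraic tensor product `N₁ ⊗ N₂ ⊆ M_{n₁} ⊗ M_{n₂} = M_{n₁ × n₂}`,
realized as the linear span of Kronecker products. -/
def tensorSpan {n₁ n₂ : Type*} [Fintype n₁] [DecidableEq n₁] [Fintype n₂] [DecidableEq n₂]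
    (N₁ : Set (Mat n₁)) (N₂ : Set (Mat n₂)) : Set (Mat (n₁ × n₂)) :=
  ↑(Submodule.span ℂ {z : Mat (n₁ × n₂) | ∃ x ∈ N₁, ∃ y ∈ N₂, z = x ⊗ₖ y})

/-- `D_{p,cb}(M‖N) = sup_k D_p(M_k ⊗ M ‖ M_k ⊗ N)`. -/
def DpCb (p : ℝ≥0∞) (N : Set (Mat n)) : EReal :=
  ⨆ k : ℕ, DpRel p Set.univ (tensorSpan (Set.univ : Set (Mat (Fin k))) N)

/-- `E` is the trace preserving conditional expectation onto `N`, i.e. the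
orthogonal projection onto `N` with respect to the Hilbert–Schmidt inner
product `⟨x,y⟩ = Tr(x* y)`. -/
def IsCondExp (N : Set (Mat n)) (E : Mat n →ₗ[ℂ] Mat n) : Prop :=
  (∀ x, E x ∈ N) ∧ (∀ x ∈ N, E x = x) ∧
    ∀ x y, y ∈ N → ((E x)ᴴ * y).trace = (xᴴ * y).trace

/-- The Pimsner–Popa index constant
`λ(M:N) = max {c ≥ 0 | c x ≤ E(x) for all x ≥ 0}`. -/
def ppIndex (E : Mat n →ₗ[ℂ] Mat n) : ℝ :=
  sSup {c : ℝ | 0 ≤ c ∧ ∀ x : Mat n, x.PosSemidef → (E x - c • x).PosSemidef}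

/-- von Neumann entropy `H(ρ) = -Tr(ρ log ρ)`. -/
def vnEntropy (ρ : Mat n) : ℝ := - traceR (ρ * mlog ρ)

/-- The amplification `id_{M_k} ⊗ Φ` acting on `M_k ⊗ M_n = M_{k × n}`,
applying `Φ` blockwise. -/
def ampFun (k : Type*) [Fintype k] [DecidableEq k] (Φ : Mat n →ₗ[ℂ] Mat n)
    (X : Mat (k × n)) : Mat (k × n) :=
  Matrix.of fun a b => Φ (Matrix.of fun s t => X (a.1, s) (b.1, t)) a.2 b.2

/-- Complete positivity: all amplifications `id_{M_k} ⊗ Φ` preserve positive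
semidefiniteness. -/
def IsCP (Φ : Mat n →ₗ[ℂ] Mat n) : Prop :=
  ∀ (k : ℕ) (X : Mat (Fin k × n)), X.PosSemidef → (ampFun (Fin k) Φ X).PosSemidef

/-- Completely positive and trace preserving. -/
def IsCPTP (Φ : Mat n →ₗ[ℂ] Mat n) : Prop :=
  IsCP Φ ∧ ∀ x : Mat n, (Φ x).trace = x.trace

/-- The left regular representation matrix `λ(g)`: `λ(g) δ_h = δ_{gh}`. -/
def lreg {G : Type*} [Group G] [Fintype G] [DecidableEq G] (g : G) : Mat G :=
  Matrix.of fun a b => if a = g * b then (1 : ℂ) else 0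

/-- The span of `{λ(g) : g ∈ S}` inside `B(ℓ²(G)) ≅ M_{|G|}`. -/
def groupAlg {G : Type*} [Group G] [Fintype G] [DecidableEq G] (S : Set G) :
    Set (Mat G) :=
  ↑(Submodule.span ℂ {x : Mat G | ∃ g ∈ S, x = lreg g})


lemma cfc_form (A : Mat n) (hA : A.IsHermitian) (f : ℝ → ℝ) :
    cfc f A = (hA.eigenvectorUnitary : Mat n) *
      diagonal (fun i => ((f (hA.eigenvalues i) : ℝ) : ℂ)) *
        star (hA.eigenvectorUnitary : Mat n) := by
  rw [hA.cfc_eq f, IsHermitian.cfc, Unitary.conjStarAlgAut_apply]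
  rfl

lemma traceR_cfc_mul (A B : Mat n) (hA : A.IsHermitian) (hB : B.IsHermitian) :
    ∃ w : n → n → ℝ, (∀ i j, 0 ≤ w i j) ∧ ∀ f g : ℝ → ℝ,
      traceR (cfc f A * cfc g B) =
        ∑ i, ∑ j, f (hA.eigenvalues i) * g (hB.eigenvalues j) * w i j := by
  set U : Mat n := (hA.eigenvectorUnitary : Mat n) with hU
  set V : Mat n := (hB.eigenvectorUnitary : Mat n) with hV
  set W : Mat n := star U * V with hW
  refine ⟨fun i j => Complex.normSq (W i j), fun i j => Complex.normSq_nonneg _, fun f g => ?_⟩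
  rw [cfc_form A hA, cfc_form B hB, ← hU, ← hV]
  have h1 : (U * diagonal (fun i => ((f (hA.eigenvalues i) : ℝ) : ℂ)) * star U *
      (V * diagonal (fun i => ((g (hB.eigenvalues i) : ℝ) : ℂ)) * star V)).trace
      = (diagonal (fun i => ((f (hA.eigenvalues i) : ℝ) : ℂ)) * W *
        (diagonal (fun i => ((g (hB.eigenvalues i) : ℝ) : ℂ)) * star W)).trace := by
    have : star W = star V * U := by rw [hW, star_mul, star_star]
    rw [this, hW]
    simp only [Matrix.mul_assoc]
    rw [Matrix.trace_mul_comm U]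
    simp only [Matrix.mul_assoc]
  rw [traceR, h1, Matrix.trace]
  simp only [Matrix.diag_apply, Matrix.mul_apply (M := diagonal _ * W), Matrix.diagonal_mul,
    Complex.re_sum]
  refine Finset.sum_congr rfl fun i _ => Finset.sum_congr rfl fun j _ => ?_
  rw [Matrix.star_apply]
  have : ∀ (a b : ℝ) (z : ℂ), ((a : ℂ) * z * ((b : ℂ) * star z)).re = a * b * Complex.normSq z := by
    intro a b z
    have : (a : ℂ) * z * ((b : ℂ) * star z) = ((a * b * Complex.normSq z : ℝ) : ℂ) := by
      push_cast
      rw [Complex.normSq_eq_conj_mul_self, ← Complex.star_def]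
      ring
    rw [this, Complex.ofReal_re]
  exact this _ _ _

lemma cfc_mul_of_eigen (A P : Mat n) (hA : A.IsHermitian) (s : ℝ) (h : A * P = (s : ℂ) • P)
    (f : ℝ → ℝ) : cfc f A * P = ((f s : ℝ) : ℂ) • P := by
  set U : Mat n := (hA.eigenvectorUnitary : Mat n) with hU
  have hUU : star U * U = 1 := Unitary.coe_star_mul_self hA.eigenvectorUnitary
  have hUU' : U * star U = 1 := Unitary.coe_mul_star_self hA.eigenvectorUnitary
  have hid : A = U * diagonal (fun i => ((hA.eigenvalues i : ℝ) : ℂ)) * star U := by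
    have := cfc_form A hA (fun x => x)
    have e : cfc (fun x : ℝ => x) A = A := cfc_id' ℝ A hA
    exact e.symm.trans this
  have h2 : diagonal (fun i => ((hA.eigenvalues i : ℝ) : ℂ)) * (star U * P)
      = (s : ℂ) • (star U * P) := by
    have : star U * (A * P) = star U * ((s : ℂ) • P) := by rw [h]
    rw [Matrix.mul_smul] at this
    rw [← this]
    conv_rhs => rw [hid]
    rw [← Matrix.mul_assoc, ← Matrix.mul_assoc, ← Matrix.mul_assoc (star U), ← Matrix.mul_assoc (star U), hUU,
      Matrix.one_mul]
  have h3 : diagonal (fun i => ((f (hA.eigenvalues i) : ℝ) : ℂ)) * (star U * P)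
      = ((f s : ℝ) : ℂ) • (star U * P) := by
    ext i j
    have := congrFun (congrFun h2 i) j
    simp only [Matrix.diagonal_mul, Matrix.smul_apply, smul_eq_mul] at this ⊢
    rcases mul_eq_mul_right_iff.1 this with h | h
    · rw [Complex.ofReal_inj.1 h]
    · rw [h]; simp
  rw [cfc_form A hA, ← hU, Matrix.mul_assoc, Matrix.mul_assoc, h3, Matrix.mul_smul,
    ← Matrix.mul_assoc, hUU', Matrix.one_mul]

lemma cfc_mul_fin (A : Mat n) (f g : ℝ → ℝ) :
    cfc f A * cfc g A = cfc (fun x => f x * g x) A :=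
  (cfc_mul f g A (A.finite_real_spectrum.continuousOn f)
    (A.finite_real_spectrum.continuousOn g)).symm

/-- If `ρ ≤ c σ` with `σ` positive definite, then `D(ρ‖σ) ≤ log c`. -/
lemma entropy_le (ρ σ : Mat n) (c : ℝ) (hc : 0 < c) (hρ : IsDensity ρ) (hσ : σ.PosDef)
    (h : ((c : ℂ) • σ - ρ).PosSemidef) :
    traceR (ρ * mlog ρ - ρ * mlog σ) ≤ Real.log c := by
  have hρh := hρ.1.isHermitian
  have hσh := hσ.isHermitian
  set B : Mat n := cfc (fun x : ℝ => x⁻¹) σ with hB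
  have hBh : Bᴴ = B := (cfc_predicate (p := IsSelfAdjoint) (fun x : ℝ => x⁻¹) σ)
  have hσid : cfc (fun x : ℝ => x) σ = σ := cfc_id' ℝ σ hσh
  have hρid : cfc (fun x : ℝ => x) ρ = ρ := cfc_id' ℝ ρ hρh
  have hσone : cfc (fun _ : ℝ => (1 : ℝ)) σ = 1 := cfc_const_one ℝ σ hσh
  have hσB : σ * B = 1 := by
    conv_lhs => rw [← hσid]
    rw [hB, cfc_mul_fin, ← hσone]
    apply cfc_congr
    intro x hx
    rw [hσh.spectrum_real_eq_range_eigenvalues] at hx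
    obtain ⟨i, rfl⟩ := hx
    exact mul_inv_cancel₀ (hσ.eigenvalues_pos i).ne'
  have hBσ : B * σ = 1 := mul_eq_one_comm.1 hσB
  -- trace inequality
  have hT : traceR (ρ * ρ * B) ≤ c := by
    have e1 := (h.conjTranspose_mul_mul_same (B * ρ)).trace_nonneg
    have e2 := (hρ.1.conjTranspose_mul_mul_same (B * ρ - (c : ℂ) • 1)).trace_nonneg
    have e1' : ((B * ρ)ᴴ * ((c : ℂ) • σ - ρ) * (B * ρ)).trace
        = c * (ρ * ρ * B).trace - (ρ * B * ρ * (B * ρ)).trace := by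
      rw [conjTranspose_mul, hBh, hρh.eq]
      have : ρ * B * ((c : ℂ) • σ - ρ) * (B * ρ)
        = (c : ℂ) • (ρ * (B * σ) * (B * ρ)) - ρ * B * ρ * (B * ρ) := by
        simp only [Matrix.mul_sub, Matrix.sub_mul, Matrix.mul_smul, Matrix.smul_mul,
          Matrix.mul_assoc]
      rw [this, hBσ, trace_sub, trace_smul, Matrix.mul_one, ← Matrix.mul_assoc,
        Matrix.trace_mul_comm (ρ * B), ← Matrix.mul_assoc, smul_eq_mul]
    have e2' : ((B * ρ - (c : ℂ) • 1)ᴴ * ρ * (B * ρ - (c : ℂ) • 1)).trace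
        = (ρ * B * ρ * (B * ρ)).trace - 2 * c * (ρ * ρ * B).trace + c ^ 2 := by
      rw [conjTranspose_sub, conjTranspose_mul, hBh, hρh.eq, conjTranspose_smul,
        conjTranspose_one]
      have hcc : star (c : ℂ) = c := Complex.conj_ofReal c
      rw [hcc]
      simp only [Matrix.mul_sub, Matrix.sub_mul, Matrix.mul_smul, Matrix.smul_mul,
          Matrix.mul_one, Matrix.one_mul, trace_sub, trace_smul, smul_eq_mul, hρ.2]
      have q1 : (ρ * B * ρ).trace = (ρ * ρ * B).trace := by
        rw [Matrix.trace_mul_comm, Matrix.mul_assoc]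
      have q2 : (ρ * (B * ρ)).trace = (ρ * ρ * B).trace := by
        rw [← Matrix.mul_assoc, q1]
      rw [q1, q2]
      ring
    rw [e1'] at e1
    rw [e2'] at e2
    have e3 := add_nonneg e1 e2
    have e4 : (c : ℂ) * (ρ * ρ * B).trace - (ρ * B * ρ * (B * ρ)).trace
      + ((ρ * B * ρ * (B * ρ)).trace - 2 * c * (ρ * ρ * B).trace + c ^ 2)
      = (c : ℂ) * ((c : ℂ) - (ρ * ρ * B).trace) := by ring
    rw [e4] at e3
    have e5 := (Complex.le_def.1 e3).1
    rw [Complex.re_ofReal_mul] at e5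
    simp only [Complex.zero_re, Complex.sub_re, Complex.ofReal_re] at e5
    have := nonneg_of_mul_nonneg_right e5 hc
    unfold traceR
    linarith
  obtain ⟨w, hw0, hw⟩ := traceR_cfc_mul ρ σ hρh hσh
  have t1 : traceR (ρ * mlog ρ) = ∑ i, ∑ j, (hρh.eigenvalues i * Real.log (hρh.eigenvalues i))
      * 1 * w i j := by
    rw [← hw (fun x => x * Real.log x) (fun _ => 1), hσone, Matrix.mul_one, ← cfc_mul_fin, hρid]
    rfl
  have t2 : traceR (ρ * mlog σ) = ∑ i, ∑ j, (hρh.eigenvalues i)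
      * Real.log (hσh.eigenvalues j) * w i j := by
    rw [← hw (fun x => x) Real.log, hρid]
    rfl
  have t3 : traceR (ρ * ρ * B) = ∑ i, ∑ j, (hρh.eigenvalues i * hρh.eigenvalues i)
      * (hσh.eigenvalues j)⁻¹ * w i j := by
    rw [← hw (fun x => x * x) (fun x => x⁻¹), ← cfc_mul_fin, hρid]
  obtain ⟨N, hN⟩ : ∃ N : ℝ, N = 1 := ⟨1, rfl⟩
  have t4 : N = ∑ i, ∑ j, (hρh.eigenvalues i) * 1 * w i j := by
    rw [← hw (fun x => x) (fun _ => 1), hσone, Matrix.mul_one, hρid, traceR, hρ.2, hN]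
    rfl
  have key : traceR (ρ * mlog ρ) - traceR (ρ * mlog σ) - Real.log c * N
      ≤ c⁻¹ * traceR (ρ * ρ * B) - N := by
    rw [t1, t2, t3, t4]
    simp only [Finset.mul_sum, ← Finset.sum_sub_distrib]
    refine Finset.sum_le_sum fun i _ => Finset.sum_le_sum fun j _ => ?_
    have hp := hρ.1.eigenvalues_nonneg i
    have hq := hσ.eigenvalues_pos j
    have hwij := hw0 i j
    generalize hρh.eigenvalues i = p at *
    generalize hσh.eigenvalues j = q at *
    generalize w i j = v at *
    have main : p * Real.log p - p * Real.log q - Real.log c * p ≤ c⁻¹ * (p * p * q⁻¹) - p := by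
      rcases hp.eq_or_lt with rfl | hp
      · simp
      · have := Real.log_le_sub_one_of_pos (x := p / (c * q)) (by positivity)
        rw [Real.log_div hp.ne' (by positivity), Real.log_mul hc.ne' hq.ne'] at this
        have h2 := mul_le_mul_of_nonneg_left this hp.le
        have h3 : p * (p / (c * q) - 1) = c⁻¹ * (p * p * q⁻¹) - p := by
          field_simp
        rw [h3] at h2
        linarith
    have := mul_le_mul_of_nonneg_right main hwij
    linarith
  have : c⁻¹ * traceR (ρ * ρ * B) ≤ 1 := by
    rw [inv_mul_le_iff₀ hc]; simpa using hT
  have e : traceR (ρ * mlog ρ - ρ * mlog σ) = traceR (ρ * mlog ρ) - traceR (ρ * mlog σ) := by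
    simp [traceR, trace_sub]
  rw [e]
  rw [hN] at key
  linarith

lemma mem_groupAlg {G : Type*} [Group G] [Fintype G] [DecidableEq G] (S : Set G) (x : Mat G) :
    x ∈ groupAlg S ↔ (∀ a b, x a b = x (a * b⁻¹) 1) ∧ ∀ a, a ∉ S → x a 1 = 0 := by
  constructor
  · intro h
    refine Submodule.span_induction (p := fun x _ => (∀ a b, x a b = x (a * b⁻¹) 1) ∧
      ∀ a, a ∉ S → x a 1 = 0) ?_ ?_ ?_ ?_ h
    · rintro x ⟨g, hg, rfl⟩
      refine ⟨fun a b => ?_, fun a ha => ?_⟩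
      · simp only [lreg, Matrix.of_apply, mul_one, mul_inv_eq_iff_eq_mul]
      · simp only [lreg, Matrix.of_apply, mul_one]
        rw [if_neg]
        rintro rfl
        exact ha hg
    · exact ⟨fun a b => rfl, fun a _ => rfl⟩
    · rintro x y _ _ ⟨h1, h2⟩ ⟨h3, h4⟩
      refine ⟨fun a b => ?_, fun a ha => ?_⟩
      · rw [Matrix.add_apply, h1, h3]; rfl
      · rw [Matrix.add_apply, h2 a ha, h4 a ha, add_zero]
    · rintro c x _ ⟨h1, h2⟩
      refine ⟨fun a b => ?_, fun a ha => ?_⟩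
      · rw [Matrix.smul_apply, h1]; rfl
      · rw [Matrix.smul_apply, h2 a ha, smul_zero]
  · rintro ⟨h1, h2⟩
    have : x = ∑ g, x g 1 • lreg g := by
      ext a b
      rw [Matrix.sum_apply, Finset.sum_eq_single (a * b⁻¹)]
      · simp [lreg, ← h1]
      · intro g _ hg
        have : a ≠ g * b := fun h => hg (by rw [h]; group)
        simp [lreg, this]
      · simp
    rw [this]
    refine Submodule.sum_mem _ fun g _ => ?_
    by_cases hg : g ∈ S
    · exact Submodule.smul_mem _ _ (Submodule.subset_span ⟨g, hg, rfl⟩)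
    · rw [h2 g hg, zero_smul]
      exact Submodule.zero_mem _

/-- Pinching: positivity and the Pimsner-Popa inequality. -/
lemma pinch_posSemidef {K : Type*} [Fintype K] [DecidableEq K] (κ : n → K) (ρ : Mat n)
    (hρ : ρ.PosSemidef) :
    (Matrix.of fun a b => if κ a = κ b then ρ a b else 0 : Mat n).PosSemidef ∧
    (((Fintype.card K : ℝ) : ℂ) • (Matrix.of fun a b => if κ a = κ b then ρ a b else 0 : Mat n)
      - ρ).PosSemidef := by
  let P : K → Mat n := fun k => diagonal (fun a => if κ a = k then 1 else 0)
  have hP : ∀ k, (P k)ᴴ = P k := by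
    intro k
    simp only [P, diagonal_conjTranspose]
    congr 1
    ext a
    simp only [Pi.star_apply]
    split_ifs <;> simp
  have hE : (Matrix.of fun a b => if κ a = κ b then ρ a b else 0 : Mat n)
      = ∑ k, P k * ρ * P k := by
    ext a b
    simp [P, Matrix.sum_apply, Matrix.diagonal_mul, Matrix.mul_diagonal, eq_comm]
  have hP1 : ∑ k, P k = 1 := by
    ext a b
    simp only [P, Matrix.sum_apply, Matrix.diagonal_apply, Matrix.one_apply]
    split_ifs <;> simp
  have hsum : ∑ k, ∑ l, (P k - P l) * ρ * (P k - P l)ᴴ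
      = (2 : ℂ) • (((Fintype.card K : ℝ) : ℂ) • (∑ k, P k * ρ * P k) - ρ) := by
    have h1 : ∑ k, ∑ l, P k * ρ * P l = ρ := by
      simp only [← Finset.mul_sum, ← Finset.sum_mul, hP1, one_mul, mul_one]
    have h2 : ∑ k, ∑ l, P l * ρ * P k = ρ := by
      rw [Finset.sum_comm]; exact h1
    have h3 : ∀ k l, (P k - P l) * ρ * (P k - P l)ᴴ
        = P k * ρ * P k + P l * ρ * P l - P k * ρ * P l - P l * ρ * P k := by
      intro k l
      rw [conjTranspose_sub, hP, hP]
      noncomm_ring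
    simp only [h3, Finset.sum_sub_distrib, Finset.sum_add_distrib, h1, h2]
    simp only [Finset.sum_const, Finset.card_univ, ← Finset.smul_sum]
    rw [two_smul]
    simp only [Complex.ofReal_natCast, Nat.cast_smul_eq_nsmul]
    abel
  constructor
  · rw [hE]
    refine posSemidef_sum _ fun k _ => ?_
    have := hρ.mul_mul_conjTranspose_same (P k)
    rwa [hP] at this
  · rw [hE]
    have h4 : (∑ k, ∑ l, (P k - P l) * ρ * (P k - P l)ᴴ).PosSemidef :=
      posSemidef_sum _ fun k _ => posSemidef_sum _ fun l _ =>
        hρ.mul_mul_conjTranspose_same _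
    rw [hsum] at h4
    have h5 := h4.smul (a := ((1 / 2 : ℝ) : ℂ)) (by
      rw [Complex.zero_le_real]; norm_num)
    rw [smul_smul] at h5
    norm_num at h5
    simpa using h5


lemma upper {G : Type} [Group G] [Fintype G] [DecidableEq G] (H : Subgroup G) (ρ : Mat G)
    (hρA : ρ ∈ groupAlg (Set.univ : Set G)) (hρ : IsDensity ρ) (t : ℝ) (ht0 : 0 < t)
    (ht1 : t < 1) : ∃ σ ∈ groupAlg (H : Set G), IsDensity σ ∧
      DU ρ σ ≤ ((Real.log (H.index / t : ℝ) : ℝ) : EReal) := by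
  let κ : G → G ⧸ H := fun a => QuotientGroup.mk a⁻¹
  have hκ : ∀ a b, κ a = κ b ↔ a * b⁻¹ ∈ H := by
    intro a b
    simp only [κ, QuotientGroup.eq, inv_inv]
  obtain ⟨h1, -⟩ := (mem_groupAlg _ _).1 hρA
  obtain ⟨p1, p2⟩ := pinch_posSemidef κ ρ hρ.1
  set E : Mat G := Matrix.of fun a b => if κ a = κ b then ρ a b else 0 with hE
  have hcard : (Fintype.card (G ⧸ H) : ℝ) = H.index := by
    rw [Subgroup.index, Nat.card_eq_fintype_card]
  rw [hcard] at p2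
  have hEtr : E.trace = 1 := by
    rw [← hρ.2]
    simp [Matrix.trace, hE]
  have hEmem : E ∈ groupAlg (H : Set G) := by
    rw [mem_groupAlg]
    refine ⟨fun a b => ?_, fun a ha => ?_⟩
    · simp only [hE, Matrix.of_apply, hκ, inv_one, mul_one]
      rw [← h1]
    · simp only [hE, Matrix.of_apply, hκ, inv_one, mul_one]
      exact if_neg ha
  have h1mem : (1 : Mat G) ∈ groupAlg (H : Set G) := by
    rw [mem_groupAlg]
    refine ⟨fun a b => ?_, fun a ha => ?_⟩
    · simp [Matrix.one_apply, mul_inv_eq_one]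
    · rw [Matrix.one_apply, if_neg]
      rintro rfl
      exact ha H.one_mem
  have hN : (0 : ℝ) < Fintype.card G := by exact_mod_cast Fintype.card_pos
  have hi : (0 : ℝ) < H.index := by
    exact_mod_cast Nat.pos_of_ne_zero H.index_ne_zero_of_finite
  have hr : 0 < (1 - t) / Fintype.card G := div_pos (by linarith) hN
  set r : ℝ := (1 - t) / Fintype.card G with hrdef
  have hpos1 : ((r : ℂ) • (1 : Mat G)).PosDef :=
    PosDef.one.smul (by exact_mod_cast hr)
  have hpos2 : ((t : ℂ) • E).PosSemidef := p1.smul (by exact_mod_cast ht0.le)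
  have hσ : ((t : ℂ) • E + (r : ℂ) • (1 : Mat G)).PosDef := hpos1.posSemidef_add hpos2
  refine ⟨(t : ℂ) • E + (r : ℂ) • (1 : Mat G), ?_, ⟨hσ.posSemidef, ?_⟩, ?_⟩
  · exact Submodule.add_mem _ (Submodule.smul_mem _ _ hEmem) (Submodule.smul_mem _ _ h1mem)
  · rw [trace_add, trace_smul, trace_smul, hEtr, trace_one, hrdef]
    have : (Fintype.card G : ℂ) ≠ 0 := by exact_mod_cast hN.ne'
    push_cast
    simp only [smul_eq_mul]
    field_simp
    ring
  · have hs : suppLe ρ ((t : ℂ) • E + (r : ℂ) • (1 : Mat G)) := by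
      intro v hv
      have hinj := Matrix.mulVec_injective_iff_isUnit.2 hσ.isUnit
      have : v = 0 := hinj (by rw [hv, Matrix.mulVec_zero])
      rw [this, Matrix.mulVec_zero]
    rw [DU, if_pos hs, EReal.coe_le_coe_iff]
    refine entropy_le _ _ _ (div_pos hi ht0) hρ hσ ?_
    have e : (((H.index / t : ℝ)) : ℂ) • ((t : ℂ) • E + (r : ℂ) • (1 : Mat G)) - ρ
        = (((H.index : ℝ) : ℂ) • E - ρ) + ((H.index / t : ℝ) : ℂ) • ((r : ℂ) • (1 : Mat G)) := by
      rw [smul_add, smul_smul, ← Complex.ofReal_mul, div_mul_cancel₀ _ ht0.ne']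
      abel
    rw [e]
    refine p2.add (hpos1.posSemidef.smul ?_)
    exact_mod_cast (div_pos hi ht0).le

lemma lower {G : Type} [Group G] [Fintype G] [DecidableEq G] (H : Subgroup G) :
    ∃ ρ ∈ groupAlg (Set.univ : Set G), IsDensity ρ ∧
      ∀ σ ∈ groupAlg (H : Set G), IsDensity σ →
        ((Real.log (H.index : ℝ) : ℝ) : EReal) ≤ DU ρ σ := by
  have hN : (0 : ℝ) < Fintype.card G := by exact_mod_cast Fintype.card_pos
  have hNc : (Fintype.card G : ℂ) ≠ 0 := by exact_mod_cast hN.ne'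
  set P : Mat G := Matrix.of fun _ _ => ((Fintype.card G : ℝ)⁻¹ : ℂ) with hP
  have hPP : P * P = ((1 : ℝ) : ℂ) • P := by
    ext a b
    simp [hP, Matrix.mul_apply, hNc]
  have hPh : Pᴴ = P := by
    ext a b
    simp [hP]
  have hPpos : P.PosSemidef := by
    have := posSemidef_conjTranspose_mul_self P
    rwa [hPh, hPP, Complex.ofReal_one, one_smul] at this
  have hPtr : P.trace = 1 := by
    simp [hP, Matrix.trace, hNc]
  refine ⟨P, ?_, ⟨hPpos, hPtr⟩, ?_⟩
  · rw [mem_groupAlg]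
    exact ⟨fun a b => rfl, fun a ha => absurd (Set.mem_univ a) ha⟩
  intro σ hσ hσd
  obtain ⟨h1, h2⟩ := (mem_groupAlg _ _).1 hσ
  rw [DU]
  split_ifs with hs
  swap
  · exact le_top
  set z : ℂ := ∑ g, σ g 1 with hz
  have hrow : ∀ a, ∑ b, σ a b = z := by
    intro a
    rw [hz]
    refine Fintype.sum_equiv ((Equiv.inv G).trans (Equiv.mulLeft a)) _ _ fun b => ?_
    rw [h1]
    rfl
  have hone : ∀ a b, σ a b = 0 ∨ a * b⁻¹ ∈ H := by
    intro a b
    by_cases h : a * b⁻¹ ∈ H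
    · exact Or.inr h
    · left; rw [h1]; exact h2 _ h
  have hdiag : ∀ a, σ a a = ((Fintype.card G : ℝ)⁻¹ : ℝ) := by
    have : ∀ a, σ a a = σ 1 1 := fun a => by rw [h1, mul_inv_cancel]
    intro a
    rw [this]
    have h := hσd.2
    simp only [Matrix.trace, Matrix.diag_apply, this, Finset.sum_const, Finset.card_univ,
      nsmul_eq_mul] at h
    push_cast
    exact eq_inv_of_mul_eq_one_right h
  -- positivity of the eigenvalue
  have hznn : 0 ≤ z := by
    have := hσd.1.dotProduct_mulVec_nonneg (fun _ => 1)
    have e : star (fun _ : G => (1 : ℂ)) ⬝ᵥ (σ *ᵥ fun _ => 1) = ((Fintype.card G : ℝ) : ℂ) * z := by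
      simp [dotProduct, Matrix.mulVec, hrow]
    rw [e] at this
    have h3 : (0 : ℂ) ≤ ((Fintype.card G : ℝ)⁻¹ : ℝ) := by exact_mod_cast (inv_pos.2 hN).le
    have := mul_nonneg h3 this
    rwa [← mul_assoc, ← Complex.ofReal_mul, inv_mul_cancel₀ hN.ne', Complex.ofReal_one,
      one_mul] at this
  obtain ⟨s, hs0, hsz⟩ : ∃ s : ℝ, 0 ≤ s ∧ z = s :=
    ⟨z.re, (Complex.le_def.1 hznn).1, Complex.ext rfl (Complex.le_def.1 hznn).2.symm⟩
  have hsne : s ≠ 0 := by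
    intro h0
    have := hs (fun _ => 1) (by
      ext a
      simp [Matrix.mulVec, dotProduct, hrow, hsz, h0])
    have := congrFun this 1
    simp [hP, Matrix.mulVec, dotProduct, hNc] at this
  have hspos : 0 < s := lt_of_le_of_ne hs0 hsne.symm
  have hentry : ∀ g, (σ g 1).re ≤ if g ∈ H then (Fintype.card G : ℝ)⁻¹ else 0 := by
    intro g
    split_ifs with hg
    swap
    · rw [h2 g hg]; simp
    by_cases hg1 : g = 1
    · subst hg1; rw [hdiag, Complex.ofReal_re]
    have := (hσd.1.submatrix ![g, 1]).dotProduct_mulVec_nonneg ![1, -1]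
    simp [dotProduct, Matrix.mulVec, Fin.sum_univ_two, hdiag] at this
    have h4 := (Complex.le_def.1 this).1
    have h5 : (σ 1 g).re = (σ g 1).re := by
      rw [← hσd.1.isHermitian.apply 1 g]; simp
    simp [h5] at h4
    have h6 : ((Fintype.card G : ℂ)⁻¹).re = (Fintype.card G : ℝ)⁻¹ := by
      rw [← Complex.ofReal_natCast, ← Complex.ofReal_inv, Complex.ofReal_re]
    linarith
  have hsle : s ≤ (H.index : ℝ)⁻¹ := by
    have : s = ∑ g, (σ g 1).re := by
      rw [← Complex.re_sum, ← hz, hsz, Complex.ofReal_re]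
    rw [this]
    refine (Finset.sum_le_sum fun g _ => hentry g).trans ?_
    rw [← Finset.sum_filter, Finset.sum_const, nsmul_eq_mul]
    have hc : (Finset.univ.filter fun g => g ∈ H).card = Nat.card H := by
      rw [Nat.card_eq_fintype_card, Fintype.card_subtype]
    rw [hc]
    have h7 := H.card_mul_index
    rw [Nat.card_eq_fintype_card (α := G)] at h7
    rw [← h7]
    have h8 : (Nat.card H : ℝ) ≠ 0 := by exact_mod_cast Nat.card_pos.ne'
    push_cast
    rw [mul_inv, ← mul_assoc, mul_inv_cancel₀ h8, one_mul]
  have hσP : σ * P = (s : ℂ) • P := by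
    ext a b
    simp only [hP, Matrix.mul_apply, Matrix.of_apply, ← Finset.sum_mul, hrow, hsz,
      Matrix.smul_apply, smul_eq_mul]
  have e1 : mlog P * P = ((Real.log 1 : ℝ) : ℂ) • P := cfc_mul_of_eigen P P hPh 1 hPP _
  have e2 : mlog σ * P = ((Real.log s : ℝ) : ℂ) • P :=
    cfc_mul_of_eigen σ P hσd.1.isHermitian s hσP _
  rw [EReal.coe_le_coe_iff, traceR, trace_sub, Matrix.trace_mul_comm P, Matrix.trace_mul_comm P,
    e1, e2, trace_smul, trace_smul, hPtr]
  have h9 := Real.log_le_log hspos hsle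
  rw [Real.log_inv] at h9
  simp only [Real.log_one, Complex.ofReal_zero, zero_smul, smul_eq_mul, mul_one, zero_sub,
    Complex.neg_re, Complex.ofReal_re]
  linarith

/-- for a finite group `G` and a subgroup `H ≤ G`, with
`L(G) = span λ(G)` and `L(H) = span λ(H)` inside `B(ℓ²(G)) ≅ M_{|G|}`,
`D(L(G)‖L(H)) = log [G : H]`. -/
theorem statement13 (G : Type) [Group G] [Fintype G] [DecidableEq G]
    (H : Subgroup G) :
    DpRel 1 (groupAlg (Set.univ : Set G)) (groupAlg (H : Set G))
      = ((Real.log (H.index : ℝ) : ℝ) : EReal) := by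
  have hDp : ∀ ρ σ : Mat G, Dp 1 ρ σ = DU ρ σ := by
    intro ρ σ
    rw [Dp, if_neg ENNReal.one_ne_top, if_pos rfl]
  have hi : (0 : ℝ) < H.index := by
    exact_mod_cast Nat.pos_of_ne_zero H.index_ne_zero_of_finite
  unfold DpRel DpSet
  simp only [hDp]
  apply le_antisymm
  · refine iSup₂_le fun ρ hρ => ?_
    refine EReal.le_of_forall_lt_iff_le.1 fun x hx => ?_
    rw [EReal.coe_lt_coe_iff] at hx
    obtain ⟨σ, h1, h2, h3⟩ := upper H ρ hρ.1 hρ.2 (Real.exp (-(x - Real.log H.index)))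
      (Real.exp_pos _) (Real.exp_lt_one_iff.2 (by linarith))
    refine (iInf₂_le σ ⟨h1, h2⟩).trans (h3.trans ?_)
    rw [EReal.coe_le_coe_iff, Real.log_div hi.ne' (Real.exp_pos _).ne', Real.log_exp]
    linarith
  · obtain ⟨ρ, h1, h2, h3⟩ := lower H
    exact (le_iInf₂ fun σ hσ => h3 σ hσ.1 hσ.2).trans (le_iSup₂_of_le ρ ⟨h1, h2⟩ le_rfl)

end GJL
end
end

section
/- Let N ⊆ M_m be a unital *-subalgebra and suppose D(M_m‖N) < ∞. If ρ and σ are densities in M_m with ‖ρ − σ‖_1 = ε, then |D(ρ‖N) − D(σ‖N)| ≤ 2ε · D(M_m‖N) + (1 + 2ε) · h(2ε/(1 + 2ε)), where h(λ) = −λ log λ − (1−λ) log(1−λ) is the binary entropy function. -/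
open scoped ENNReal Classical ComplexOrder
open Matrix

noncomputable section

namespace GJL

variable {n : Type*} [Fintype n] [DecidableEq n]

/-! ### Spectral decompositions -/

lemma spec_decomp {A : Mat n} (hA : A.IsHermitian) :
    ∃ (U : Mat n) (p : n → ℝ), Uᴴ * U = 1 ∧ U * Uᴴ = 1 ∧
      (∀ f : ℝ → ℝ, cfc f A = U * diagonal (fun i => ((f (p i) : ℝ) : ℂ)) * Uᴴ) ∧
      (∀ i, p i ∈ spectrum ℝ A) := by
  refine ⟨hA.eigenvectorUnitary, hA.eigenvalues, ?_, ?_, ?_, hA.eigenvalues_mem_spectrum_real⟩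
  · simpa [star_eq_conjTranspose] using Unitary.coe_star_mul_self hA.eigenvectorUnitary
  · simpa [star_eq_conjTranspose] using Unitary.coe_mul_star_self hA.eigenvectorUnitary
  · intro f
    rw [hA.cfc_eq]
    rfl

lemma cont_spec (f : ℝ → ℝ) (A : Mat n) : ContinuousOn f (spectrum ℝ A) :=
  (A.finite_real_spectrum).continuousOn f

lemma cont_spec_image (f g : ℝ → ℝ) (A : Mat n) : ContinuousOn f (g '' spectrum ℝ A) :=
  ((A.finite_real_spectrum).image g).continuousOn f

lemma trace_diag_conj (U X : Mat n) (d : n → ℂ) :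
    (U * diagonal d * Uᴴ * X).trace = ∑ i, d i * (Uᴴ * X * U) i i := by
  have : (U * diagonal d * Uᴴ * X).trace = (diagonal d * (Uᴴ * X * U)).trace := by
    rw [Matrix.mul_assoc, Matrix.mul_assoc U, Matrix.trace_mul_comm]
    simp only [Matrix.mul_assoc]
  rw [this, Matrix.trace]
  simp [Matrix.diagonal_mul]

lemma conj_diag_apply (M : Mat n) (d : n → ℂ) (i : n) :
    (Mᴴ * diagonal d * M) i i = ∑ j, (Complex.normSq (M j i) : ℂ) * d j := by
  rw [Matrix.mul_assoc, Matrix.mul_apply]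
  refine Finset.sum_congr rfl fun j _ => ?_
  rw [Matrix.diagonal_mul, Matrix.conjTranspose_apply, Complex.normSq_eq_conj_mul_self]
  simp only [RCLike.star_def]
  ring

/-- the functional whose supremum over `X` gives the resolvent quantity -/
def Lfun (s : ℝ) (X A B : Mat n) : ℝ :=
  2 * traceR (Xᴴ * A) - traceR (Xᴴ * B * X) - s * traceR (Xᴴ * X * A)

lemma cplx_ineq (y u : ℂ) (p r : ℝ) (hr : 0 < r) :
    2 * (star y * u * p).re - r * Complex.normSq y ≤ Complex.normSq u * (p ^ 2 / r) := by
  rw [mul_div_assoc', le_div_iff₀ hr]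
  simp [Complex.normSq_apply]
  nlinarith [sq_nonneg (r * y.re - p * u.re), sq_nonneg (r * y.im - p * u.im)]

lemma cplx_eq (u : ℂ) (p r : ℝ) (hr : 0 < r) :
    2 * (star (u * ((p / r : ℝ) : ℂ)) * u * p).re - r * Complex.normSq (u * ((p / r : ℝ) : ℂ)) =
      Complex.normSq u * (p ^ 2 / r) := by
  simp [Complex.normSq_apply]
  field_simp
  ring

lemma pair_decomp {A B : Mat n} (hA : A.IsHermitian) (hB : B.IsHermitian) :
    ∃ (w : n → n → ℝ) (p q : n → ℝ), (∀ i j, 0 ≤ w i j) ∧ (∀ i, p i ∈ spectrum ℝ A) ∧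
      (∀ j, q j ∈ spectrum ℝ B) ∧
      (∀ f g : ℝ → ℝ, traceR (cfc f A * cfc g B) = ∑ i, ∑ j, w i j * (f (p i) * g (q j))) ∧
      (∀ s : ℝ, (∀ i j, 0 < q j + s * p i) →
        (∀ X, Lfun s X A B ≤ ∑ i, ∑ j, w i j * (p i ^ 2 / (q j + s * p i))) ∧
        ∃ X, Lfun s X A B = ∑ i, ∑ j, w i j * (p i ^ 2 / (q j + s * p i))) := by
  obtain ⟨U, p, hU, hU', hf, hp⟩ := spec_decomp hA
  obtain ⟨V, q, hV, hV', hg, hq⟩ := spec_decomp hB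
  have hAeq : A = U * diagonal (fun i => ((p i : ℝ) : ℂ)) * Uᴴ := by
    have := hf id
    rw [cfc_id ℝ A hA.isSelfAdjoint] at this
    exact this
  have hBeq : B = V * diagonal (fun i => ((q i : ℝ) : ℂ)) * Vᴴ := by
    have := hg id
    rw [cfc_id ℝ B hB.isSelfAdjoint] at this
    exact this
  set M : Mat n := Vᴴ * U with hM
  have key : ∀ s X, Lfun s X A B = ∑ i, ∑ j,
      (2 * (star ((Vᴴ * X * U) j i) * M j i * p i).re
        - (q j + s * p i) * Complex.normSq ((Vᴴ * X * U) j i)) := by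
    intro s X
    set Y : Mat n := Vᴴ * X * U with hY
    have e1 : traceR (Xᴴ * A) = ∑ i, ∑ j, (star (Y j i) * M j i * p i).re := by
      have : (Xᴴ * A).trace = ∑ i, ∑ j, (star (Y j i) * M j i * p i) := by
        rw [Matrix.trace_mul_comm, hAeq, trace_diag_conj]
        have : Uᴴ * Xᴴ * U = Yᴴ * M := by
          rw [hY, hM]
          simp only [Matrix.conjTranspose_mul, Matrix.conjTranspose_conjTranspose, Matrix.mul_assoc]
          rw [← Matrix.mul_assoc V Vᴴ, hV', Matrix.one_mul]
        rw [this]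
        refine Finset.sum_congr rfl fun i _ => ?_
        rw [Matrix.mul_apply, Finset.mul_sum]
        refine Finset.sum_congr rfl fun j _ => ?_
        rw [Matrix.conjTranspose_apply]
        ring
      simp only [traceR, this, Complex.re_sum]
    have e2 : traceR (Xᴴ * B * X) = ∑ i, ∑ j, q j * Complex.normSq (Y j i) := by
      have : (Xᴴ * B * X).trace = ∑ i, (Yᴴ * diagonal (fun i => ((q i : ℝ) : ℂ)) * Y) i i := by
        change _ = Matrix.trace _
        rw [hY, hBeq]
        simp only [Matrix.conjTranspose_mul, Matrix.conjTranspose_conjTranspose]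
        rw [Matrix.mul_assoc Uᴴ, Matrix.mul_assoc Uᴴ, Matrix.trace_mul_comm Uᴴ]
        simp only [Matrix.mul_assoc]
        rw [hU', Matrix.mul_one]
      simp only [traceR, this, conj_diag_apply, Complex.re_sum]
      refine Finset.sum_congr rfl fun i _ => Finset.sum_congr rfl fun j _ => ?_
      rw [← Complex.ofReal_mul, Complex.ofReal_re, mul_comm]
    have e3 : traceR (Xᴴ * X * A) = ∑ i, ∑ j, p i * Complex.normSq (Y j i) := by
      have : (Xᴴ * X * A).trace = ∑ i, (p i : ℂ) * (Yᴴ * diagonal (fun _ => (1 : ℂ)) * Y : Mat n) i i := by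
        rw [Matrix.trace_mul_comm, hAeq, trace_diag_conj]
        have : Uᴴ * (Xᴴ * X) * U = Yᴴ * diagonal (fun _ => (1 : ℂ)) * Y := by
          rw [hY, Matrix.diagonal_one]
          simp only [Matrix.conjTranspose_mul, Matrix.conjTranspose_conjTranspose,
            Matrix.mul_assoc, Matrix.one_mul]
          rw [← Matrix.mul_assoc V Vᴴ, hV', Matrix.one_mul]
        rw [this]
      simp only [traceR, this, conj_diag_apply, Complex.re_sum, Finset.mul_sum]
      refine Finset.sum_congr rfl fun i _ => Finset.sum_congr rfl fun j _ => ?_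
      rw [mul_one, ← Complex.ofReal_mul, Complex.ofReal_re]
    rw [Lfun, e1, e2, e3, Finset.mul_sum, Finset.mul_sum, ← Finset.sum_sub_distrib,
      ← Finset.sum_sub_distrib]
    refine Finset.sum_congr rfl fun i _ => ?_
    rw [Finset.mul_sum, Finset.mul_sum, ← Finset.sum_sub_distrib,
      ← Finset.sum_sub_distrib]
    refine Finset.sum_congr rfl fun j _ => ?_
    ring
  refine ⟨fun i j => Complex.normSq (M j i), p, q, fun i j => Complex.normSq_nonneg _, hp, hq,
    ?_, ?_⟩
  · intro f g
    rw [hf, hg, traceR, trace_diag_conj, Complex.re_sum]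
    refine Finset.sum_congr rfl fun i _ => ?_
    have : Uᴴ * (V * diagonal (fun i => ((g (q i) : ℝ) : ℂ)) * Vᴴ) * U
        = Mᴴ * diagonal (fun i => ((g (q i) : ℝ) : ℂ)) * M := by
      rw [hM]
      simp only [Matrix.conjTranspose_mul, Matrix.conjTranspose_conjTranspose, Matrix.mul_assoc]
    rw [this, conj_diag_apply, Complex.re_ofReal_mul, Complex.re_sum, Finset.mul_sum]
    refine Finset.sum_congr rfl fun j _ => ?_
    rw [← Complex.ofReal_mul, Complex.ofReal_re]
    ring
  · intro s hs
    constructor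
    · intro X
      rw [key]
      exact Finset.sum_le_sum fun i _ => Finset.sum_le_sum fun j _ => cplx_ineq _ _ _ _ (hs i j)
    · let Y : Mat n := Matrix.of fun j i => M j i * ((p i / (q j + s * p i) : ℝ) : ℂ)
      refine ⟨V * Y * Uᴴ, ?_⟩
      have : Vᴴ * (V * Y * Uᴴ) * U = Y := by
        simp only [Matrix.mul_assoc]
        rw [hU, Matrix.mul_one, ← Matrix.mul_assoc, hV, Matrix.one_mul]
      rw [key, this]
      exact Finset.sum_congr rfl fun i _ => Finset.sum_congr rfl fun j _ =>
        cplx_eq _ _ _ (hs i j)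

lemma spec_nonneg {A : Mat n} (hA : A.PosSemidef) {x : ℝ} (hx : x ∈ spectrum ℝ A) : 0 ≤ x := by
  rw [hA.1.spectrum_real_eq_range_eigenvalues] at hx
  obtain ⟨i, rfl⟩ := hx
  exact hA.eigenvalues_nonneg i

lemma spec_pos {A : Mat n} (hA : A.PosDef) {x : ℝ} (hx : x ∈ spectrum ℝ A) : 0 < x := by
  rw [hA.1.spectrum_real_eq_range_eigenvalues] at hx
  obtain ⟨i, rfl⟩ := hx
  exact hA.eigenvalues_pos i

/-- Relative entropy functional on unnormalized matrices. -/
def Fr (A B : Mat n) : ℝ := traceR (A * mlog A - A * mlog B)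

lemma traceR_add (A B : Mat n) : traceR (A + B) = traceR A + traceR B := by simp [traceR]
lemma traceR_sub (A B : Mat n) : traceR (A - B) = traceR A - traceR B := by simp [traceR]
lemma traceR_smul (c : ℝ) (A : Mat n) : traceR (c • A) = c * traceR A := by simp [traceR]

lemma Lfun_add (s : ℝ) (X A₁ A₂ B₁ B₂ : Mat n) :
    Lfun s X (A₁ + A₂) (B₁ + B₂) = Lfun s X A₁ B₁ + Lfun s X A₂ B₂ := by
  simp only [Lfun, Matrix.mul_add, Matrix.add_mul, traceR_add]
  ring

/-- spectral data -/
lemma pair_data {A B : Mat n} (hA : A.PosSemidef) (hB : B.PosDef) :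
    ∃ (w : n → n → ℝ) (p q : n → ℝ), (∀ i j, 0 ≤ w i j) ∧ (∀ i, 0 ≤ p i) ∧
      (∀ j, 0 < q j) ∧
      (traceR A = ∑ i, ∑ j, w i j * p i) ∧ (traceR B = ∑ i, ∑ j, w i j * q j) ∧
      (Fr A B = ∑ i, ∑ j, w i j * (p i * (Real.log (p i) - Real.log (q j)))) ∧
      (∀ s : ℝ, 0 ≤ s →
        (∀ X, Lfun s X A B ≤ ∑ i, ∑ j, w i j * (p i ^ 2 / (q j + s * p i))) ∧
        ∃ X, Lfun s X A B = ∑ i, ∑ j, w i j * (p i ^ 2 / (q j + s * p i))) := by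
  obtain ⟨w, p, q, hw, hp, hq, ht, hL⟩ := pair_decomp hA.1 hB.1
  have hp' : ∀ i, 0 ≤ p i := fun i => spec_nonneg hA (hp i)
  have hq' : ∀ i, 0 < q i := fun i => spec_pos hB (hq i)
  have hcA : cfc (fun x : ℝ => x) A = A := cfc_id' ℝ A hA.1.isSelfAdjoint
  have hcB : cfc (fun x : ℝ => x) B = B := cfc_id' ℝ B hB.1.isSelfAdjoint
  have h1A : cfc (fun _ : ℝ => (1 : ℝ)) A = 1 := by
    rw [cfc_const 1 A hA.1.isSelfAdjoint, map_one]
  have h1B : cfc (fun _ : ℝ => (1 : ℝ)) B = 1 := by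
    rw [cfc_const 1 B hB.1.isSelfAdjoint, map_one]
  refine ⟨w, p, q, hw, hp', hq', ?_, ?_, ?_, ?_⟩
  · have := ht (fun x => x) (fun _ => 1)
    rw [hcA, h1B] at this
    simpa using this
  · have := ht (fun _ => 1) (fun x => x)
    rw [hcB, h1A] at this
    simpa using this
  · have e1 := ht (fun x => x * Real.log x) (fun _ => 1)
    have e2 := ht (fun x => x) Real.log
    rw [cfc_mul _ _ A (cont_spec _ _) (cont_spec _ _), hcA, h1B, Matrix.mul_one] at e1
    rw [hcA] at e2
    rw [Fr, traceR_sub, mlog, mlog, e1, e2, ← Finset.sum_sub_distrib]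
    refine Finset.sum_congr rfl fun i _ => ?_
    rw [← Finset.sum_sub_distrib]
    refine Finset.sum_congr rfl fun j _ => ?_
    ring
  · intro s hs
    exact hL s fun i j => by have := hq' j; have := mul_nonneg hs (hp' i); linarith

/-- truncated integral -/
def trunc (w : n → n → ℝ) (p q : n → ℝ) (T : ℝ) : ℝ :=
  ∑ i, ∑ j, w i j * (p i * (Real.log (q j + T * p i) - Real.log (q j)))

lemma trunc_zero (w : n → n → ℝ) (p q : n → ℝ) : trunc w p q 0 = 0 := by
  simp [trunc]

lemma trunc_deriv (w : n → n → ℝ) (p q : n → ℝ) (hp : ∀ i, 0 ≤ p i) (hq : ∀ i, 0 < q i) (T : ℝ)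
    (hT : 0 ≤ T) :
    HasDerivAt (trunc w p q) (∑ i, ∑ j, w i j * (p i ^ 2 / (q j + T * p i))) T := by
  unfold trunc
  refine HasDerivAt.fun_sum fun i _ => HasDerivAt.fun_sum fun j _ => ?_
  have h0 : q j + T * p i ≠ 0 := by
    have := hq j; have := mul_nonneg hT (hp i); linarith
  have h1 : HasDerivAt (fun T : ℝ => q j + T * p i) (p i) T := by
    simpa using ((hasDerivAt_id T).mul_const (p i)).const_add (q j)
  have h2 := (((h1.log h0).sub_const (Real.log (q j))).const_mul (p i)).const_mul (w i j)
  refine h2.congr_deriv ?_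
  rw [pow_two, mul_div_assoc]

lemma trunc_lim (w : n → n → ℝ) (p q : n → ℝ) (hp : ∀ i, 0 ≤ p i) (hq : ∀ i, 0 < q i) :
    Filter.Tendsto (fun T => trunc w p q T - (∑ i, ∑ j, w i j * p i) * Real.log T) Filter.atTop
      (nhds (∑ i, ∑ j, w i j * (p i * (Real.log (p i) - Real.log (q j))))) := by
  have : (fun T => trunc w p q T - (∑ i, ∑ j, w i j * p i) * Real.log T) =
      fun T => ∑ i, ∑ j, w i j * (p i * (Real.log (q j + T * p i) - Real.log T - Real.log (q j))) := by
    funext T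
    rw [trunc, Finset.sum_mul, ← Finset.sum_sub_distrib]
    refine Finset.sum_congr rfl fun i _ => ?_
    rw [Finset.sum_mul, ← Finset.sum_sub_distrib]
    refine Finset.sum_congr rfl fun j _ => ?_
    ring
  rw [this]
  refine tendsto_finsetSum _ fun i _ => tendsto_finsetSum _ fun j _ => ?_
  refine Filter.Tendsto.const_mul _ ?_
  rcases (hp i).eq_or_lt with h | h
  · simp [← h]
  · refine Filter.Tendsto.const_mul _ (Filter.Tendsto.sub_const ?_ _)
    have h1 : Filter.Tendsto (fun T : ℝ => q j * T⁻¹ + p i) Filter.atTop (nhds (p i)) := by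
      simpa using (tendsto_inv_atTop_zero.const_mul (q j)).add_const (p i)
    refine ((Real.continuousAt_log h.ne').tendsto.comp h1).congr' ?_
    filter_upwards [Filter.eventually_gt_atTop 0] with T hT
    have := hq j
    rw [Function.comp, ← Real.log_div (by positivity) hT.ne']
    congr 1
    field_simp

/-- Joint subadditivity (joint convexity) of relative entropy. -/
lemma Fr_subadd {A₁ A₂ B₁ B₂ : Mat n} (hA₁ : A₁.PosSemidef) (hA₂ : A₂.PosSemidef)
    (hB₁ : B₁.PosDef) (hB₂ : B₂.PosDef) :
    Fr (A₁ + A₂) (B₁ + B₂) ≤ Fr A₁ B₁ + Fr A₂ B₂ := by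
  obtain ⟨w₁, p₁, q₁, hw₁, hp₁, hq₁, ht₁, -, hF₁, hL₁⟩ := pair_data hA₁ hB₁
  obtain ⟨w₂, p₂, q₂, hw₂, hp₂, hq₂, ht₂, -, hF₂, hL₂⟩ := pair_data hA₂ hB₂
  obtain ⟨w, p, q, hw, hp, hq, ht, -, hF, hL⟩ := pair_data (hA₁.add hA₂) (hB₁.add hB₂)
  have hmono : MonotoneOn (fun T => trunc w₁ p₁ q₁ T + trunc w₂ p₂ q₂ T - trunc w p q T)
      (Set.Ici 0) := by
    have hd : ∀ T : ℝ, 0 ≤ T → HasDerivAt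
        (fun T => trunc w₁ p₁ q₁ T + trunc w₂ p₂ q₂ T - trunc w p q T) _ T := fun T hT =>
      ((trunc_deriv w₁ p₁ q₁ hp₁ hq₁ T hT).add (trunc_deriv w₂ p₂ q₂ hp₂ hq₂ T hT)).sub
        (trunc_deriv w p q hp hq T hT)
    refine monotoneOn_of_deriv_nonneg (convex_Ici 0)
      (fun T hT => (hd T hT).continuousAt.continuousWithinAt)
      (fun T hT => ?_) (fun T hT => ?_)
    · rw [interior_Ici] at hT
      exact (hd T (le_of_lt hT)).differentiableAt.differentiableWithinAt
    · rw [interior_Ici] at hT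
      have hT' : 0 ≤ T := le_of_lt hT
      rw [(hd T hT').deriv]
      obtain ⟨X, hX⟩ := (hL T hT').2
      rw [← hX, Lfun_add]
      have := (hL₁ T hT').1 X
      have := (hL₂ T hT').1 X
      linarith
  have hl := trunc_lim w p q hp hq
  have hl12 := (trunc_lim w₁ p₁ q₁ hp₁ hq₁).add (trunc_lim w₂ p₂ q₂ hp₂ hq₂)
  rw [← hF, ← ht] at hl
  rw [← hF₁, ← hF₂, ← ht₁, ← ht₂] at hl12
  refine le_of_tendsto_of_tendsto hl hl12 ?_
  filter_upwards [Filter.eventually_ge_atTop 0] with T hT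
  have h := hmono (Set.mem_Ici.2 le_rfl) (Set.mem_Ici.2 hT) hT
  simp only [trunc_zero] at h
  rw [traceR_add]
  linarith

/-- Klein inequality. -/
lemma Fr_klein {A B : Mat n} (hA : A.PosSemidef) (hB : B.PosDef) :
    traceR A - traceR B ≤ Fr A B := by
  obtain ⟨w, p, q, hw, hp, hq, ht, ht', hF, -⟩ := pair_data hA hB
  rw [ht, ht', hF, ← Finset.sum_sub_distrib]
  refine Finset.sum_le_sum fun i _ => ?_
  rw [← Finset.sum_sub_distrib]
  refine Finset.sum_le_sum fun j _ => ?_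
  rw [← mul_sub]
  refine mul_le_mul_of_nonneg_left ?_ (hw i j)
  rcases (hp i).eq_or_lt with h | h
  · simp [← h, (hq j).le]
  · have h1 := Real.log_le_sub_one_of_pos (div_pos (hq j) h)
    rw [Real.log_div (hq j).ne' h.ne'] at h1
    have h2 := mul_le_mul_of_nonneg_left h1 h.le
    have h3 : p i * (q j / p i - 1) = q j - p i := by field_simp
    rw [h3] at h2
    linarith

/-! ### Scaling and superadditivity -/

lemma cfc_idR {A : Mat n} (hA : A.IsHermitian) : cfc (fun x : ℝ => x) A = A :=
  cfc_id' ℝ A hA.isSelfAdjoint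

lemma mul_mlog {A : Mat n} (hA : A.IsHermitian) :
    A * mlog A = cfc (fun x : ℝ => x * Real.log x) A := by
  rw [cfc_mul _ _ A (cont_spec _ _) (cont_spec _ _), cfc_idR hA, mlog]

lemma Fr_smul_right {A B : Mat n} (hB : B.PosDef) {c : ℝ} (hc : 0 < c) :
    Fr A (c • B) = Fr A B - Real.log c * traceR A := by
  have h : mlog (c • B) = Real.log c • (1 : Mat n) + mlog B := by
    rw [mlog, ← cfc_comp_const_mul c Real.log B (cont_spec_image _ _ _) hB.1.isSelfAdjoint,
      cfc_congr (g := fun x => Real.log c + Real.log x), cfc_const_add _ _ _ (cont_spec _ _)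
        hB.1.isSelfAdjoint, Algebra.algebraMap_eq_smul_one, mlog]
    intro x hx
    exact Real.log_mul hc.ne' (spec_pos hB hx).ne'
  rw [Fr, Fr, h, Matrix.mul_add, traceR_sub, traceR_add, Matrix.mul_smul, Matrix.mul_one,
    traceR_smul, traceR_sub]
  ring

lemma xlogx_smul {A : Mat n} (hA : A.PosSemidef) {c : ℝ} (hc : 0 < c) :
    traceR ((c • A) * mlog (c • A)) = c * traceR (A * mlog A) + c * Real.log c * traceR A := by
  have h : cfc (fun x : ℝ => x * Real.log x) (c • A) =
      (c * Real.log c) • A + c • cfc (fun x : ℝ => x * Real.log x) A := by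
    rw [← cfc_comp_const_mul c _ A (cont_spec_image _ _ _) hA.1.isSelfAdjoint,
      cfc_congr (g := fun x => (c * Real.log c) * x + c * (x * Real.log x)),
      cfc_add _ _ _ (cont_spec _ _) (cont_spec _ _), cfc_const_mul _ _ _ (cont_spec _ _),
      cfc_const_mul _ _ _ (cont_spec _ _), cfc_idR hA.1]
    intro x hx
    rcases (spec_nonneg hA hx).eq_or_lt with h | h
    · simp [← h]
    · simp only []
      rw [Real.log_mul hc.ne' h.ne']
      ring
  have hs : (c • A).IsHermitian := by
    rw [Matrix.IsHermitian, Matrix.conjTranspose_smul, hA.1.eq, star_trivial]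
  rw [mul_mlog hs, h, traceR_add, traceR_smul, traceR_smul, mul_mlog hA.1]
  ring

lemma Fr_smul {A B : Mat n} (hA : A.PosSemidef) (hB : B.PosDef) {c : ℝ} (hc : 0 < c) :
    Fr (c • A) (c • B) = c * Fr A B := by
  rw [Fr_smul_right hB hc, Fr, traceR_sub, xlogx_smul hA hc, Matrix.smul_mul, traceR_smul,
    traceR_smul, Fr, traceR_sub]
  ring

lemma posDef_smul_one {η : ℝ} (hη : 0 < η) : (η • (1 : Mat n)).PosDef :=
  Matrix.PosDef.one.smul hη

lemma traceR_cfc {A : Mat n} (hA : A.PosSemidef) :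
    ∃ p : n → ℝ, (∀ i, 0 ≤ p i) ∧ ∀ f : ℝ → ℝ, traceR (cfc f A) = ∑ i, f (p i) := by
  obtain ⟨U, p, hU, -, hf, hp⟩ := spec_decomp hA.1
  refine ⟨p, fun i => spec_nonneg hA (hp i), fun f => ?_⟩
  have := trace_diag_conj U 1 (fun i => ((f (p i) : ℝ) : ℂ))
  rw [Matrix.mul_one, Matrix.mul_one, hU, ← hf] at this
  rw [traceR, this]
  simp

lemma mul_mlog_shift {A : Mat n} (hA : A.PosSemidef) (η : ℝ) :
    A * mlog (A + η • 1) = cfc (fun x : ℝ => x * Real.log (x + η)) A := by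
  have h : A + η • 1 = cfc (fun x : ℝ => x + η) A := by
    rw [cfc_add_const _ _ _ (cont_spec _ _) hA.1.isSelfAdjoint, cfc_idR hA.1,
      Algebra.algebraMap_eq_smul_one]
  rw [h, mlog, ← cfc_comp' _ _ A (cont_spec_image _ _ _) (cont_spec _ _) hA.1.isSelfAdjoint,
    cfc_mul _ _ A (cont_spec _ _) (cont_spec _ _), cfc_idR hA.1]

lemma Fr_shift_nonpos {A : Mat n} (hA : A.PosSemidef) {η : ℝ} (hη : 0 < η) :
    Fr A (A + η • 1) ≤ 0 := by
  obtain ⟨p, hp, ht⟩ := traceR_cfc hA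
  rw [Fr, traceR_sub, mul_mlog hA.1, mul_mlog_shift hA, ht, ht, sub_nonpos]
  refine Finset.sum_le_sum fun i _ => ?_
  rcases (hp i).eq_or_lt with h | h
  · simp [← h]
  · exact mul_le_mul_of_nonneg_left (Real.log_le_log h (by linarith)) h.le

lemma Fr_zero (B : Mat n) : Fr 0 B = 0 := by simp [Fr, traceR]

lemma Fr_dom {A B : Mat n} (hA : A.PosSemidef) (hB : B.PosSemidef) {η : ℝ} (hη : 0 < η) :
    Fr A (A + B + (2 * η) • 1) ≤ 0 := by
  have h := Fr_subadd hA (Matrix.PosSemidef.zero (n := n) (R := ℂ))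
    (Matrix.PosDef.posSemidef_add hA (posDef_smul_one hη))
    (Matrix.PosDef.posSemidef_add hB (posDef_smul_one hη))
  rw [Fr_zero, add_zero, add_zero] at h
  have e : A + B + (2 * η) • (1 : Mat n) = A + η • 1 + (B + η • 1) := by
    rw [two_mul, add_smul]; abel
  rw [e]
  exact h.trans (Fr_shift_nonpos hA hη)

lemma xlogx_superadd {A B : Mat n} (hA : A.PosSemidef) (hB : B.PosSemidef) :
    traceR (A * mlog A) + traceR (B * mlog B) ≤ traceR ((A + B) * mlog (A + B)) := by
  obtain ⟨p, hp, ht⟩ := traceR_cfc (hA.add hB)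
  have key : ∀ η : ℝ, 0 < η → traceR (A * mlog A) + traceR (B * mlog B) ≤
      ∑ i, p i * Real.log (p i + 2 * η) := by
    intro η hη
    have h1 := Fr_dom hA hB hη
    have h2 := Fr_dom hB hA hη
    rw [add_comm B A] at h2
    rw [Fr, traceR_sub] at h1 h2
    have h3 := ht (fun x => x * Real.log (x + 2 * η))
    rw [← mul_mlog_shift (hA.add hB), Matrix.add_mul A B, traceR_add] at h3
    linarith
  rw [mul_mlog (hA.add hB).1, ht]
  have hl : Filter.Tendsto (fun η : ℝ => ∑ i, p i * Real.log (p i + 2 * η))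
      (nhdsWithin 0 (Set.Ioi 0)) (nhds (∑ i, p i * Real.log (p i))) := by
    refine tendsto_finsetSum _ fun i _ => ?_
    rcases (hp i).eq_or_lt with h | h
    · simp [← h]
    · refine Filter.Tendsto.const_mul _ ?_
      have h1 : Filter.Tendsto (fun η : ℝ => p i + 2 * η) (nhds 0) (nhds (p i)) := by
        have : Continuous (fun η : ℝ => p i + 2 * η) := by fun_prop
        simpa using this.tendsto 0
      exact ((Real.continuousAt_log h.ne').tendsto.comp h1).mono_left nhdsWithin_le_nhds
  refine ge_of_tendsto hl ?_
  filter_upwards [self_mem_nhdsWithin] with η hη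
  exact key η hη

lemma Fr_superadd_left {A B τ : Mat n} (hA : A.PosSemidef) (hB : B.PosSemidef) :
    Fr A τ + Fr B τ ≤ Fr (A + B) τ := by
  have := xlogx_superadd hA hB
  have e : traceR ((A + B) * mlog τ) = traceR (A * mlog τ) + traceR (B * mlog τ) := by
    rw [Matrix.add_mul, traceR_add]
  simp only [Fr, traceR_sub]
  linarith

/-! ### Perturbation of the reference state -/

lemma Fr_perturb {A B : Mat n} (hA : A.PosSemidef) (hB : B.PosSemidef) (hs : suppLe A B)
    {a b : ℝ} (ha : 0 < a) (hb : 0 < b) :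
    Fr A (a • B + b • 1) ≤ Fr A B - Real.log a * traceR A := by
  obtain ⟨w, p, q, hw, hp, hq, ht, -⟩ := pair_decomp hA.1 hB.1
  have hm : mlog (a • B + b • 1) = cfc (fun x => Real.log (a * x + b)) B := by
    have h : a • B + b • 1 = cfc (fun x : ℝ => a * x + b) B := by
      rw [cfc_add_const _ _ _ (cont_spec _ _) hB.1.isSelfAdjoint,
        cfc_const_mul _ _ _ (cont_spec _ _), cfc_idR hB.1,
        Algebra.algebraMap_eq_smul_one]
    rw [h, mlog, ← cfc_comp' _ _ B (cont_spec_image _ _ _) (cont_spec _ _) hB.1.isSelfAdjoint]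
  let g : ℝ → ℝ := fun x => if x = 0 then 1 else 0
  have hker : A * cfc g B = 0 := by
    have h0 : B * cfc g B = 0 := by
      have : cfc (fun x : ℝ => x * g x) B = 0 := by
        have e : (fun x : ℝ => x * g x) = fun _ => 0 := by
          funext x; by_cases hx : x = 0 <;> simp [g, hx]
        rw [e, cfc_const _ _ hB.1.isSelfAdjoint, map_zero]
      rwa [cfc_mul _ _ B (cont_spec _ _) (cont_spec _ _), cfc_idR hB.1] at this
    ext i j
    have h1 : B.mulVec (fun k => cfc g B k j) = 0 := by
      funext i
      have := congrFun (congrFun h0 i) j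
      rwa [Matrix.mul_apply] at this
    have h2 := congrFun (hs _ h1) i
    rw [Matrix.mul_apply]
    exact h2
  have hz : ∀ i j, q j = 0 → w i j * p i = 0 := by
    have h := ht (fun x => x) g
    rw [cfc_idR hA.1, hker] at h
    have hnn : ∀ i j, 0 ≤ w i j * (p i * g (q j)) := fun i j =>
      mul_nonneg (hw i j) (mul_nonneg (spec_nonneg hA (hp i)) (by simp only [g]; split_ifs <;> simp))
    have h' : ∑ i, ∑ j, w i j * (p i * g (q j)) = 0 := by rw [← h]; simp [traceR]
    intro i j hj
    have h1 := (Finset.sum_eq_zero_iff_of_nonneg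
      (fun i _ => Finset.sum_nonneg fun j _ => hnn i j)).1 h' i (Finset.mem_univ i)
    have h2 := (Finset.sum_eq_zero_iff_of_nonneg (fun j _ => hnn i j)).1 h1 j (Finset.mem_univ j)
    simpa [g, hj] using h2
  have e1 := ht (fun x => x) Real.log
  have e2 := ht (fun x => x) (fun x => Real.log (a * x + b))
  have e3 := ht (fun x => x) (fun _ => Real.log a)
  rw [cfc_idR hA.1] at e1 e2 e3
  rw [cfc_const _ _ hB.1.isSelfAdjoint, Algebra.algebraMap_eq_smul_one, Matrix.mul_smul,
    Matrix.mul_one, traceR_smul] at e3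
  rw [Fr, Fr, traceR_sub, traceR_sub, hm, mlog, mlog, e1, e2, e3]
  have : ∑ i, ∑ j, w i j * (p i * Real.log (q j)) + ∑ i, ∑ j, w i j * (p i * Real.log a) ≤
      ∑ i, ∑ j, w i j * (p i * Real.log (a * q j + b)) := by
    rw [← Finset.sum_add_distrib]
    refine Finset.sum_le_sum fun i _ => ?_
    rw [← Finset.sum_add_distrib]
    refine Finset.sum_le_sum fun j _ => ?_
    rcases (spec_nonneg hB (hq j)).eq_or_lt with h | h
    · have := hz i j h.symm
      simp only [← mul_assoc, this, zero_mul, add_zero, le_refl]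
    · rw [← mul_add, ← mul_add, ← Real.log_mul h.ne' ha.ne']
      refine mul_le_mul_of_nonneg_left (mul_le_mul_of_nonneg_left ?_ (spec_nonneg hA (hp i)))
        (hw i j)
      exact Real.log_le_log (by positivity) (by nlinarith)
  linarith

/-! ### Trace norm decomposition -/

lemma cfc_posSemidef {A : Mat n} (hA : A.IsHermitian) {f : ℝ → ℝ} (hf : ∀ x, 0 ≤ f x) :
    (cfc f A).PosSemidef := by
  obtain ⟨U, p, -, -, h, -⟩ := spec_decomp hA
  rw [h]
  refine Matrix.PosSemidef.mul_mul_conjTranspose_same ?_ U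
  refine Matrix.PosSemidef.diagonal fun i => ?_
  simpa using hf (p i)

lemma snorm_one {x : Mat n} (hx : x.IsHermitian) :
    snorm 1 x = traceR (cfc (fun t : ℝ => |t|) x) := by
  have h : xᴴ * x = cfc (fun t : ℝ => t * t) x := by
    rw [cfc_mul _ _ x (cont_spec _ _) (cont_spec _ _), cfc_idR hx, hx.eq]
  rw [snorm, mpow, h, ← cfc_comp' _ _ x (cont_spec_image _ _ _) (cont_spec _ _) hx.isSelfAdjoint]
  simp only [div_one, Real.rpow_one]
  congr 2
  funext t
  rw [← Real.sqrt_eq_rpow, Real.sqrt_mul_self_eq_abs]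

lemma jordan {x : Mat n} (hx : x.IsHermitian) (htr : x.trace = 0) :
    ∃ P Q : Mat n, P.PosSemidef ∧ Q.PosSemidef ∧ x = P - Q ∧
      traceR P = snorm 1 x / 2 ∧ traceR Q = snorm 1 x / 2 := by
  have hP : cfc (fun t : ℝ => 2⁻¹ * (|t| + t)) x = (2⁻¹ : ℝ) • (cfc (fun t : ℝ => |t|) x + x) := by
    rw [cfc_const_mul _ _ _ (cont_spec _ _), cfc_add _ _ _ (cont_spec _ _) (cont_spec _ _),
      cfc_idR hx]
  have hQ : cfc (fun t : ℝ => 2⁻¹ * (|t| - t)) x = (2⁻¹ : ℝ) • (cfc (fun t : ℝ => |t|) x - x) := by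
    rw [cfc_const_mul _ _ _ (cont_spec _ _), cfc_sub _ _ _ (cont_spec _ _) (cont_spec _ _),
      cfc_idR hx]
  have h0 : traceR x = 0 := by simp [traceR, htr]
  refine ⟨_, _, cfc_posSemidef hx (f := fun t : ℝ => 2⁻¹ * (|t| + t)) fun t => ?_,
    cfc_posSemidef hx (f := fun t : ℝ => 2⁻¹ * (|t| - t)) fun t => ?_, ?_, ?_, ?_⟩
  · have := neg_abs_le t; linarith
  · have := le_abs_self t; linarith
  · rw [hP, hQ, ← smul_sub, add_sub_sub_cancel, ← two_smul ℝ x, smul_smul]; norm_num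
  · rw [hP, traceR_smul, traceR_add, h0, snorm_one hx]; ring
  · rw [hQ, traceR_smul, traceR_sub, h0, snorm_one hx]; ring

/-! ### Core estimate -/

lemma core {ρ σ P Q τ₁ τ₂ : Mat n} {δ : ℝ} (hδ : 0 < δ) (hσ : σ.PosSemidef) (hσt : traceR σ = 1)
    (hρ : ρ.PosSemidef)
    (hP : P.PosSemidef) (hQ : Q.PosSemidef) (hPt : traceR P = δ)
    (hX : ρ + δ • Q = σ + P) (h₁ : τ₁.PosDef) (h₂ : τ₂.PosDef) (h₁t : traceR τ₁ = 1)
    (h₂t : traceR τ₂ = 1) :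
    Fr σ ((1 + δ)⁻¹ • (τ₁ + δ • τ₂)) ≤ Fr ρ τ₁ + δ * Fr Q τ₂ +
      (1 + δ) * Real.binEntropy (δ / (1 + δ)) := by
  set τ := (1 + δ)⁻¹ • (τ₁ + δ • τ₂) with hτ
  have hd : 0 < 1 + δ := by linarith
  have hs : (τ₁ + δ • τ₂).PosDef := h₁.add (h₂.smul hδ)
  have hτp : τ.PosDef := hs.smul (inv_pos.2 hd)
  have hτt : traceR τ = 1 := by
    rw [hτ, traceR_smul, traceR_add, traceR_smul, h₁t, h₂t]; field_simp
  have a1 : Fr (ρ + δ • Q) (τ₁ + δ • τ₂) ≤ Fr ρ τ₁ + δ * Fr Q τ₂ := by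
    rw [← Fr_smul hQ h₂ hδ]
    exact Fr_subadd hρ (hQ.smul hδ.le) h₁ (h₂.smul hδ)
  have a2 : Fr (ρ + δ • Q) τ = Fr (ρ + δ • Q) (τ₁ + δ • τ₂) + Real.log (1 + δ) * (1 + δ) := by
    rw [hτ, Fr_smul_right hs (inv_pos.2 hd), hX, traceR_add, hσt, hPt, Real.log_inv]; ring
  have a3 : Fr σ τ + Fr P τ ≤ Fr (ρ + δ • Q) τ := by
    rw [hX]; exact Fr_superadd_left hσ hP
  have a4 := Fr_klein hP (hτp.smul hδ)
  rw [Fr_smul_right hτp hδ, traceR_smul, hτt, hPt] at a4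
  have a5 : (1 + δ) * Real.binEntropy (δ / (1 + δ)) =
      (1 + δ) * Real.log (1 + δ) - δ * Real.log δ := by
    have e : 1 - δ / (1 + δ) = 1 / (1 + δ) := by field_simp; ring
    rw [Real.binEntropy, e, Real.log_inv, Real.log_inv, Real.log_div hδ.ne' hd.ne',
      Real.log_div one_ne_zero hd.ne', Real.log_one]
    field_simp
    ring
  linarith

/-! ### Passing to the infimum -/

lemma Dp_one (ρ τ : Mat n) : Dp 1 ρ τ = DU ρ τ := by simp [Dp]

lemma suppLe_of_posDef {ρ τ : Mat n} (h : τ.PosDef) : suppLe ρ τ := by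
  intro v hv
  have : v = 0 := by
    by_contra hne
    have := h.dotProduct_mulVec_pos hne
    rw [hv] at this
    simp at this
  rw [this, Matrix.mulVec_zero]

lemma DpSet_le_Fr {S : Set (Mat n)} {σ τ : Mat n} (hτS : τ ∈ S) (hτ : IsDensity τ)
    (hp : τ.PosDef) : DpSet 1 σ S ≤ ((Fr σ τ : ℝ) : EReal) := by
  have h : DpSet 1 σ S ≤ Dp 1 σ τ := iInf₂_le τ ⟨hτS, hτ⟩
  rw [Dp_one, DU, if_pos (suppLe_of_posDef hp)] at h
  exact h

lemma DpSet_lt_elim (N : StarSubalgebra ℂ (Mat n)) {ρ : Mat n} (hρ : IsDensity ρ) {r : ℝ}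
    (h : DpSet 1 ρ (N : Set (Mat n)) < (r : EReal)) :
    ∃ τ ∈ N, IsDensity τ ∧ τ.PosDef ∧ Fr ρ τ < r := by
  simp only [DpSet, iInf_lt_iff] at h
  obtain ⟨τ, ⟨hτN, hτ⟩, h⟩ := h
  rw [Dp_one, DU] at h
  split_ifs at h with hs
  · have h' : Fr ρ τ < r := by exact_mod_cast h
    have hρt : traceR ρ = 1 := by simp [traceR, hρ.2]
    have hl : Filter.Tendsto (fun η : ℝ => Fr ρ τ - Real.log (1 - η))
        (nhdsWithin 0 (Set.Ioi 0)) (nhds (Fr ρ τ)) := by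
      have h1 : Filter.Tendsto (fun η : ℝ => 1 - η) (nhds 0) (nhds 1) := by
        have : Continuous (fun η : ℝ => 1 - η) := by fun_prop
        simpa using this.tendsto 0
      have h2 := ((Real.continuousAt_log one_ne_zero).tendsto.comp h1).const_sub (Fr ρ τ)
      rw [Real.log_one, sub_zero] at h2
      exact h2.mono_left nhdsWithin_le_nhds
    have hev := (hl.eventually (gt_mem_nhds h')).and
      ((eventually_mem_nhdsWithin (a := (0 : ℝ)) (s := Set.Ioi 0)).and
        ((gt_mem_nhds (show (0 : ℝ) < 1 by norm_num)).filter_mono nhdsWithin_le_nhds))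
    obtain ⟨η, hη1, hη0, hη2⟩ := hev.exists
    have hη0 : 0 < η := hη0
    have hne : Nonempty n := by
      by_contra hemp
      rw [not_nonempty_iff] at hemp
      have := hρ.2
      simp [Matrix.trace] at this
    have hc : (0 : ℝ) < Fintype.card n := by exact_mod_cast Fintype.card_pos
    have ha : 0 < 1 - η := by linarith
    have hb : 0 < η / Fintype.card n := div_pos hη0 hc
    have hpd : ((1 - η) • τ + (η / Fintype.card n) • (1 : Mat n)).PosDef :=
      Matrix.PosDef.posSemidef_add (hτ.1.smul ha.le) (posDef_smul_one hb)
    have hsm : ∀ (c : ℝ) (x : Mat n), x ∈ N → c • x ∈ N := by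
      intro c x hx
      have : c • x = (c : ℂ) • x := by
        ext i j; simp
      rw [this]
      exact N.smul_mem hx _
    refine ⟨_, N.add_mem (hsm _ _ hτN) (hsm _ _ N.one_mem), ⟨hpd.posSemidef, ?_⟩, hpd, ?_⟩
    · have hcC : (Fintype.card n : ℂ) ≠ 0 := by exact_mod_cast hc.ne'
      rw [Matrix.trace_add, Matrix.trace_smul, Matrix.trace_smul, hτ.2, Matrix.trace_one]
      simp only [Complex.real_smul]
      push_cast
      field_simp
      ring
    · have := Fr_perturb hρ.1 hτ.1 hs ha hb
      rw [hρt, mul_one] at this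
      exact this.trans_lt hη1
  · exact absurd h (not_lt.2 le_top)

lemma DpSet_nonneg (N : StarSubalgebra ℂ (Mat n)) {ρ : Mat n} (hρ : IsDensity ρ) :
    0 ≤ DpSet 1 ρ (N : Set (Mat n)) := by
  by_contra h
  rw [not_le] at h
  obtain ⟨τ, -, hτ, hp, hlt⟩ := DpSet_lt_elim N hρ (r := 0) (by exact_mod_cast h)
  have := Fr_klein hρ.1 hp
  simp only [traceR, hρ.2, hτ.2] at this
  linarith

lemma DpSet_le_rel (S : Set (Mat n)) {ρ : Mat n} (hρ : IsDensity ρ) :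
    DpSet 1 ρ S ≤ DpRel 1 Set.univ S :=
  le_iSup₂ (f := fun ρ (_ : ρ ∈ {ρ ∈ Set.univ | IsDensity ρ}) => DpSet 1 ρ S) ρ
    ⟨Set.mem_univ _, hρ⟩

lemma half_bound (N : StarSubalgebra ℂ (Mat n))
    (hfin : DpRel 1 Set.univ (N : Set (Mat n)) < ⊤)
    {ρ σ P Q : Mat n} (hρ : IsDensity ρ) (hσ : IsDensity σ) {ε : ℝ} (hε : 0 < ε)
    (hP : P.PosSemidef) (hQ : Q.PosSemidef) (hPt : traceR P = ε / 2) (hQt : traceR Q = ε / 2)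
    (hx : ρ + Q = σ + P) :
    (DpSet 1 σ (N : Set (Mat n))).toReal ≤ (DpSet 1 ρ (N : Set (Mat n))).toReal +
      (2 * ε * (DpRel 1 Set.univ (N : Set (Mat n))).toReal
        + (1 + 2 * ε) * Real.binEntropy (2 * ε / (1 + 2 * ε))) := by
  have hδ : 0 < 2 * ε := by linarith
  have coe : ∀ {ω : Mat n}, IsDensity ω → (((DpSet 1 ω (N : Set (Mat n))).toReal : ℝ) : EReal) =
      DpSet 1 ω (N : Set (Mat n)) := fun {ω} hω =>
    EReal.coe_toReal ((DpSet_le_rel _ hω).trans_lt hfin).ne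
      (ne_of_gt (lt_of_lt_of_le EReal.bot_lt_zero (DpSet_nonneg N hω)))
  have coeR : (((DpRel 1 Set.univ (N : Set (Mat n))).toReal : ℝ) : EReal) =
      DpRel 1 Set.univ (N : Set (Mat n)) :=
    EReal.coe_toReal hfin.ne (ne_of_gt (lt_of_lt_of_le EReal.bot_lt_zero
      ((DpSet_nonneg N hρ).trans (DpSet_le_rel _ hρ))))
  have tR : ∀ {ω : Mat n}, IsDensity ω → traceR ω = 1 := fun {ω} hω => by simp [traceR, hω.2]
  have hk : (0 : ℝ) ≤ 3 * ε / 2 := by linarith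
  -- padded positive and negative parts, both of trace `2 ε`
  have hP' : (P + (3 * ε / 2) • ρ).PosSemidef := hP.add (hρ.1.smul hk)
  have hQ' : (Q + (3 * ε / 2) • ρ).PosSemidef := hQ.add (hρ.1.smul hk)
  have hP't : traceR (P + (3 * ε / 2) • ρ) = 2 * ε := by
    rw [traceR_add, traceR_smul, hPt, tR hρ]; ring
  have hQ't : traceR (Q + (3 * ε / 2) • ρ) = 2 * ε := by
    rw [traceR_add, traceR_smul, hQt, tR hρ]; ring
  have hQh : ((2 * ε)⁻¹ • (Q + (3 * ε / 2) • ρ)).PosSemidef := hQ'.smul (inv_pos.2 hδ).le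
  have hQd : IsDensity ((2 * ε)⁻¹ • (Q + (3 * ε / 2) • ρ)) := by
    refine ⟨hQh, ?_⟩
    have hre : traceR ((2 * ε)⁻¹ • (Q + (3 * ε / 2) • ρ)) = 1 := by
      rw [traceR_smul, hQ't]; field_simp
    have him : ((2 * ε)⁻¹ • (Q + (3 * ε / 2) • ρ)).trace.im = 0 :=
      ((Complex.nonneg_iff.1 hQh.trace_nonneg).2).symm
    exact Complex.ext hre him
  refine le_of_forall_pos_le_add fun κ hκ => ?_
  set κ' : ℝ := κ / (1 + 2 * ε) with hκ'
  have hκ'0 : 0 < κ' := by positivity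
  obtain ⟨τ₁, hτ₁N, hτ₁, hp₁, hlt₁⟩ := DpSet_lt_elim N hρ
    (r := (DpSet 1 ρ (N : Set (Mat n))).toReal + κ') (by
      rw [← coe hρ]; exact_mod_cast lt_add_of_pos_right _ hκ'0)
  obtain ⟨τ₂, hτ₂N, hτ₂, hp₂, hlt₂⟩ := DpSet_lt_elim N hQd
    (r := (DpRel 1 Set.univ (N : Set (Mat n))).toReal + κ') (by
      refine (DpSet_le_rel _ hQd).trans_lt ?_
      rw [← coeR]; exact_mod_cast lt_add_of_pos_right _ hκ'0)
  have hcore := core (ρ := ρ) (σ := σ) (P := P + (3 * ε / 2) • ρ)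
    (Q := (2 * ε)⁻¹ • (Q + (3 * ε / 2) • ρ)) (τ₁ := τ₁) (τ₂ := τ₂) hδ hσ.1 (tR hσ) hρ.1 hP' hQh
    hP't (by rw [smul_smul, mul_inv_cancel₀ hδ.ne', one_smul, ← add_assoc, hx, add_assoc])
    hp₁ hp₂ (tR hτ₁) (tR hτ₂)
  have hd : (0 : ℝ) < 1 + 2 * ε := by linarith
  have hpd : ((1 + 2 * ε)⁻¹ • (τ₁ + (2 * ε) • τ₂)).PosDef :=
    (hp₁.add (hp₂.smul hδ)).smul (inv_pos.2 hd)
  have hsm : ∀ (c : ℝ) (x : Mat n), x ∈ N → c • x ∈ N := by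
    intro c x hx
    have : c • x = (c : ℂ) • x := by
      ext i j; simp
    rw [this]
    exact N.smul_mem hx _
  have hden : IsDensity ((1 + 2 * ε)⁻¹ • (τ₁ + (2 * ε) • τ₂)) := by
    refine ⟨hpd.posSemidef, ?_⟩
    rw [Matrix.trace_smul, Matrix.trace_add, Matrix.trace_smul, hτ₁.2, hτ₂.2]
    have hdC : (1 + 2 * (ε : ℂ)) ≠ 0 := by exact_mod_cast hd.ne'
    simp only [Complex.real_smul]
    push_cast
    field_simp
  have hle := DpSet_le_Fr (σ := σ) (S := (N : Set (Mat n)))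
    (hsm _ _ (N.add_mem hτ₁N (hsm _ _ hτ₂N))) hden hpd
  rw [← coe hσ] at hle
  have hle' := EReal.coe_le_coe_iff.1 hle
  have h2 := mul_le_mul_of_nonneg_left hlt₂.le hδ.le
  have h3 : κ' + 2 * ε * κ' = κ := by rw [hκ']; field_simp
  linarith

/-- continuity of `D(·‖N)`: if `D(M_m‖N) < ∞` and `ρ, σ` are
densities with `‖ρ - σ‖₁ = ε`, then
`|D(ρ‖N) - D(σ‖N)| ≤ 2ε D(M_m‖N) + (1+2ε) h(2ε/(1+2ε))` with `h` the binary
entropy function. -/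
theorem statement14 {m : ℕ} (N : StarSubalgebra ℂ (Mat (Fin m)))
    (hfin : DpRel 1 Set.univ (N : Set (Mat (Fin m))) < ⊤)
    (ρ σ : Mat (Fin m)) (hρ : IsDensity ρ) (hσ : IsDensity σ)
    (ε : ℝ) (hε : snorm 1 (ρ - σ) = ε) :
    |(DpSet 1 ρ (N : Set (Mat (Fin m)))).toReal
        - (DpSet 1 σ (N : Set (Mat (Fin m)))).toReal| ≤
      2 * ε * (DpRel 1 Set.univ (N : Set (Mat (Fin m)))).toReal
        + (1 + 2 * ε) * Real.binEntropy (2 * ε / (1 + 2 * ε)) := by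
  have hx : (ρ - σ).IsHermitian := hρ.1.1.sub hσ.1.1
  obtain ⟨P, Q, hP, hQ, hPQ, hPt, hQt⟩ := jordan hx (by rw [Matrix.trace_sub, hρ.2, hσ.2, sub_self])
  rw [hε] at hPt hQt
  have h1 : ρ + Q = σ + P := by
    have : ρ = σ + (P - Q) := by rw [← hPQ]; abel
    rw [this]; abel
  have hε0 : 0 ≤ ε := by
    have h : 0 ≤ traceR P := (Complex.nonneg_iff.1 hP.trace_nonneg).1
    linarith
  rcases hε0.eq_or_lt with h0 | hpos
  · have hP0 : P = 0 := by
      refine hP.trace_eq_zero_iff.1 (Complex.ext ?_ ((Complex.nonneg_iff.1 hP.trace_nonneg).2).symm)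
      change traceR P = 0
      rw [hPt, ← h0, zero_div]
    have hQ0 : Q = 0 := by
      refine hQ.trace_eq_zero_iff.1 (Complex.ext ?_ ((Complex.nonneg_iff.1 hQ.trace_nonneg).2).symm)
      change traceR Q = 0
      rw [hQt, ← h0, zero_div]
    rw [hP0, hQ0, add_zero, add_zero] at h1
    subst h1
    simp [← h0]
  · have a := half_bound N hfin hρ hσ hpos hP hQ hPt hQt h1
    have b := half_bound N hfin hσ hρ hpos hQ hP hQt hPt h1.symm
    rw [abs_le]
    constructor <;> linarith

end GJL
end
end
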